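/- Let G be a finite group of order 2^n with n ≥ 5 and nilpotency class n − 2 (i.e., G is a 2-group of coclass 2 and order at least 2^5). Then the automorphism group Aut(G) is a 2-group. -/

import Mathlib

/-! Let `P` be a `p`-group of automorphisms of a finite `2`-group `G`, with `p` odd. Since `P` fixes
a point in each of its invariant left cosets, `G = C_G(P) A` as soon as `A` is the last term of a
chain of `P`-invariant subgroups starting at `G` in which every step has index at most `2`. Such a
chain leads to `A = G'`: writing `G = γ₁(G) ≥ γ₂(G) ≥ …` for the lower central series, we have
`|G : γ₄(G)| ≤ 32`, so the abelianization has order at most `8`, and when it has order `4` or `8`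
the chain passes through the two-step centralizer of `γ₂(G) / γ₄(G)`. Then `G = C_G(P) G'`, and
`G' ≤ Φ(G)` forces `C_G(P) = G`, that is, `P = 1`. -/

section LowerCentralSeries

open Subgroup
open scoped commutatorElement

variable {G : Type*} [Group G]

-- Indexed from `0`: `γ 0` is `G` itself and `γ 1` the commutator subgroup.
local notation "γ" => Subgroup.lowerCentralSeries (⊤ : Subgroup G)

section RelIndex

theorem two_le_relIndex {H K : Subgroup G} [H.FiniteIndex] (h : ¬ K ≤ H) : 2 ≤ H.relIndex K :=
  one_lt_index_of_ne_top (mt subgroupOf_eq_top.1 h)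

theorem relIndex_le_index (H K : Subgroup G) [H.FiniteIndex] : H.relIndex K ≤ H.index :=
  relIndex_top_right H ▸ relIndex_le_of_le_right le_top FiniteIndex.index_ne_zero

theorem inv_mul_mem_of_relIndex_le_two {A B : Subgroup G} [A.FiniteIndex]
    (h : A.relIndex B ≤ 2) {x y : G} (hx : x ∈ B) (hxA : x ∉ A) (hy : y ∈ B) (hyA : y ∉ A) :
    x⁻¹ * y ∈ A := by
  have hindex : (A.subgroupOf B).index = 2 := h.antisymm (two_le_relIndex fun hle ↦ hxA (hle hx))
  have hmem := mul_mem_iff_of_index_two hindex (a := (⟨x, hx⟩ : B)⁻¹) (b := ⟨y, hy⟩)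
  rw [inv_mem_iff] at hmem
  exact hmem.2 (iff_of_false hxA hyA)

theorem le_of_relIndex_le_two {A B E : Subgroup G} [A.FiniteIndex]
    (h : A.relIndex B ≤ 2) {x : G} (hx : x ∈ B) (hxA : x ∉ A) (hA : A ≤ E) (hxE : x ∈ E) :
    B ≤ E := by
  intro y hy
  by_cases hyA : y ∈ A
  · exact hA hyA
  · simpa using E.mul_mem hxE (hA (inv_mul_mem_of_relIndex_le_two h hx hxA hy hyA))

end RelIndex

section Nilpotent

theorem eq_bot_of_le_commutator_top [Group.IsNilpotent G] {H : Subgroup G} (h : H ≤ ⁅H, ⊤⁆) :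
    H = ⊥ := by
  obtain ⟨n, hn⟩ := Subgroup.nilpotent_iff_lowerCentralSeries.1 ‹Group.IsNilpotent G›
  have hle (i : ℕ) : H ≤ γ i := by
    induction i with
    | zero => exact le_top
    | succ i ih => exact h.trans (commutator_mono ih le_rfl)
  exact le_bot_iff.1 (hn ▸ hle n)

theorem lowerCentralSeries_ne_bot_of_le {i j : ℕ} (hij : i ≤ j) (h : γ j ≠ ⊥) : γ i ≠ ⊥ :=
  ne_bot_of_le_ne_bot h (Subgroup.lowerCentralSeries_antitone ⊤ hij)

theorem lowerCentralSeries_succ_lt [Group.IsNilpotent G] {i : ℕ} (h : γ i ≠ ⊥) :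
    γ (i + 1) < γ i :=
  (Subgroup.lowerCentralSeries_antitone ⊤ i.le_succ).lt_of_not_ge
    fun hle ↦ h (eq_bot_of_le_commutator_top hle)

theorem commutator_le_frattini [Group.IsNilpotent G] : commutator G ≤ frattini G := by
  refine le_iInf₂ fun M (hM : IsCoatom M) ↦ ?_
  have : M.Normal :=
    NormalizerCondition.normal_of_coatom M Group.normalizerCondition_of_isNilpotent hM
  have : Nontrivial (G ⧸ M) := QuotientGroup.nontrivial_iff.2 hM.1
  by_contra hle
  refine (Group.IsSolvable.commutator_lt_top_of_nontrivial (G ⧸ M)).ne ?_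
  have hsup : M ⊔ commutator G = ⊤ := hM.2 _ (left_lt_sup.2 hle)
  have hmap := congrArg (Subgroup.map (QuotientGroup.mk' M)) hsup
  rwa [Subgroup.map_sup, QuotientGroup.map_mk'_self, bot_sup_eq, commutator_def, map_commutator,
    map_top_of_surjective _ (QuotientGroup.mk'_surjective M)] at hmap

theorem eq_top_of_sup_commutator_eq_top [Finite G] [Group.IsNilpotent G] {H : Subgroup G}
    (h : H ⊔ commutator G = ⊤) : H = ⊤ :=
  frattini_nongenerating (top_le_iff.1 (h ▸ sup_le_sup_left commutator_le_frattini H))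

theorem two_pow_le_card_lowerCentralSeries [Finite G] [Group.IsNilpotent G] (k : ℕ) :
    2 ^ (Group.nilpotencyClass G - k) ≤ Nat.card (γ k) := by
  by_cases hk : Group.nilpotencyClass G ≤ k
  · rw [Nat.sub_eq_zero_of_le hk, pow_zero]
    exact Nat.card_pos
  have hlt : γ (k + 1) < γ k :=
    lowerCentralSeries_succ_lt (mt Subgroup.lowerCentralSeries_eq_bot_iff_nilpotencyClass_le.1 hk)
  have hrel : 2 ≤ (γ (k + 1)).relIndex (γ k) := two_le_relIndex hlt.not_ge
  calc 2 ^ (Group.nilpotencyClass G - k) = 2 ^ (Group.nilpotencyClass G - (k + 1)) * 2 := by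
        rw [← pow_succ]
        congr 1
        omega
    _ ≤ Nat.card (γ (k + 1)) * (γ (k + 1)).relIndex (γ k) :=
        Nat.mul_le_mul (two_pow_le_card_lowerCentralSeries (k + 1)) hrel
    _ = Nat.card (γ k) := by
        simp only [← relIndex_bot_left, relIndex_mul_relIndex _ _ _ bot_le hlt.le]
termination_by Group.nilpotencyClass G - k
decreasing_by omega

theorem index_lowerCentralSeries_le [Finite G] [Group.IsNilpotent G] {d : ℕ}
    (h : Nat.card G ≤ 2 ^ (Group.nilpotencyClass G + d)) (k : ℕ) :
    (γ k).index ≤ 2 ^ (k + d) := by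
  refine Nat.le_of_mul_le_mul_left ?_ (pow_pos two_pos (Group.nilpotencyClass G - k))
  calc 2 ^ (Group.nilpotencyClass G - k) * (γ k).index ≤ Nat.card (γ k) * (γ k).index :=
        Nat.mul_le_mul_right _ (two_pow_le_card_lowerCentralSeries k)
    _ = Nat.card G := card_mul_index _
    _ ≤ 2 ^ (Group.nilpotencyClass G + d) := h
    _ ≤ 2 ^ (Group.nilpotencyClass G - k) * 2 ^ (k + d) := by
        rw [← pow_add]
        exact Nat.pow_le_pow_right two_pos (by omega)

end Nilpotent

section CoprimeAction

open MulAction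

variable {P : Type*} [Group P] [MulDistribMulAction P G]

theorem exists_mem_fixedPoints_inv_mul_mem [Finite G] {p : ℕ} [Fact p.Prime] (hP : IsPGroup p P)
    (hpG : ¬ p ∣ Nat.card G) {A : Subgroup G} (hA : IsInvariantBlock P (A : Set G)) {x : G}
    (hx : ∀ g : P, x⁻¹ * g • x ∈ A) : ∃ y ∈ FixedPoints.subgroup P G, x⁻¹ * y ∈ A := by
  let coset : SubMulAction P G :=
    { carrier := {y | x⁻¹ * y ∈ A}
      smul_mem' := fun g y hy ↦ by
        have hgy : g • (x⁻¹ * y) ∈ A := hA g (Set.smul_mem_smul_set hy)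
        simpa [smul_mul', mul_assoc] using A.mul_mem (hx g) hgy }
  have hcard : Nat.card coset = Nat.card A :=
    Nat.card_congr ((Equiv.mulLeft x⁻¹).subtypeEquiv fun _ ↦ Iff.rfl)
  obtain ⟨y, hy⟩ := hP.nonempty_fixed_point_of_prime_not_dvd_card coset
    (hcard ▸ fun h ↦ hpG (h.trans A.card_subgroup_dvd_card))
  exact ⟨y, fun g ↦ congrArg Subtype.val (hy g), y.2⟩

theorem fixedPoints_sup_eq_top_of_relIndex_le_two [Finite G] {p : ℕ} [Fact p.Prime]
    (hP : IsPGroup p P) (hpG : ¬ p ∣ Nat.card G) {A B : Subgroup G}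
    (hA : IsInvariantBlock P (A : Set G)) (hB : IsInvariantBlock P (B : Set G))
    (hAB : A.relIndex B ≤ 2) (h : FixedPoints.subgroup P G ⊔ B = ⊤) :
    FixedPoints.subgroup P G ⊔ A = ⊤ := by
  refine top_le_iff.1 (h ▸ sup_le le_sup_left fun x hxB ↦ ?_)
  by_cases hxA : x ∈ A
  · exact mem_sup_right hxA
  have hsmul (g : P) : g • x ∉ A := fun hgx ↦
    hxA (by simpa using hA g⁻¹ (Set.smul_mem_smul_set hgx))
  obtain ⟨y, hy, hxy⟩ := exists_mem_fixedPoints_inv_mul_mem hP hpG hA fun g ↦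
    inv_mul_mem_of_relIndex_le_two hAB hxB hxA (hB g (Set.smul_mem_smul_set hxB)) (hsmul g)
  simpa using mul_mem (mem_sup_left hy) (mem_sup_right (inv_mem hxy))

theorem isInvariantBlock_of_characteristic (H : Subgroup G) [hH : H.Characteristic] :
    IsInvariantBlock P (H : Set G) := by
  rintro g _ ⟨x, hx, rfl⟩
  exact characteristic_iff_le_comap.1 hH (MulDistribMulAction.toMulEquiv G g) hx

theorem isInvariantBlock_inf {A B : Subgroup G} (hA : IsInvariantBlock P (A : Set G))
    (hB : IsInvariantBlock P (B : Set G)) : IsInvariantBlock P ((A ⊓ B : Subgroup G) : Set G) := by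
  rintro g _ ⟨x, hx, rfl⟩
  exact ⟨hA g (Set.smul_mem_smul_set hx.1), hB g (Set.smul_mem_smul_set hx.2)⟩

end CoprimeAction

section CentralizerMod

variable {N : Subgroup G} [N.Normal]

/-- The preimage in `G` of the centralizer of the image of `S` in `G ⧸ N`. -/
def centralizerMod (N : Subgroup G) [N.Normal] (S : Set G) : Subgroup G :=
  (centralizer (QuotientGroup.mk' N '' S)).comap (QuotientGroup.mk' N)

theorem mem_centralizerMod {S : Set G} {x : G} :
    x ∈ centralizerMod N S ↔ ∀ s ∈ S, ⁅s, x⁆ ∈ N := by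
  simp only [centralizerMod, mem_comap, mem_centralizer_iff_commutator_eq_one,
    Set.forall_mem_image]
  exact forall₂_congr fun s _ ↦ QuotientGroup.eq_one_iff ⁅s, x⁆

theorem mem_centralizerMod_singleton {s x : G} : x ∈ centralizerMod N {s} ↔ ⁅s, x⁆ ∈ N := by
  simp only [mem_centralizerMod, Set.mem_singleton_iff, forall_eq]

theorem mem_centralizerMod_singleton_self (x : G) : x ∈ centralizerMod N {x} := by
  simp [mem_centralizerMod_singleton]

theorem subset_centralizerMod_comm {S T : Set G} :
    S ⊆ centralizerMod N T ↔ T ⊆ centralizerMod N S := by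
  suffices h : ∀ {S T : Set G}, S ⊆ centralizerMod N T → T ⊆ centralizerMod N S from ⟨h, h⟩
  intro S T h t ht
  refine mem_centralizerMod.2 fun s hs ↦ ?_
  rw [← commutatorElement_inv]
  exact N.inv_mem (mem_centralizerMod.1 (h hs) t ht)

theorem le_centralizerMod_iff {H K : Subgroup G} : H ≤ centralizerMod N K ↔ ⁅K, H⁆ ≤ N := by
  rw [commutator_le]
  exact ⟨fun h k hk x hx ↦ mem_centralizerMod.1 (h hx) k hk,
    fun h x hx ↦ mem_centralizerMod.2 fun k hk ↦ h k hk x hx⟩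

theorem index_centralizerMod_singleton_le [Finite G] {M : Subgroup G} {t : G}
    (h : ∀ x, ⁅t, x⁆ ∈ M) : (centralizerMod N {t}).index ≤ N.relIndex M := by
  let f : G → M ⧸ N.subgroupOf M := fun x ↦ QuotientGroup.mk ⟨⁅t, x⁆, h x⟩
  have hf (x y : G) (hxy : f x = f y) : x⁻¹ * y ∈ centralizerMod N {t} := by
    have hmem : ⁅t, x⁆⁻¹ * ⁅t, y⁆ ∈ N :=
      (QuotientGroup.eq (s := N.subgroupOf M)).1 hxy
    rw [mem_centralizerMod_singleton]
    convert ‹N.Normal›.conj_mem _ hmem x⁻¹ using 1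
    simp only [commutatorElement_def]
    group
  refine Nat.card_le_card_of_injective (fun q : G ⧸ centralizerMod N {t} ↦ f q.out) fun q r hqr ↦ ?_
  rw [← q.out_eq', ← r.out_eq']
  exact QuotientGroup.eq.2 (hf _ _ hqr)

theorem commutator_le_of_closure_eq_top {S : Set G} (hS : closure S = ⊤)
    (h : ∀ s ∈ S, ∀ t ∈ S, ⁅s, t⁆ ∈ N) : commutator G ≤ N := by
  have hSS : closure S ≤ centralizerMod N S :=
    (closure_le _).2 fun t ht ↦ mem_centralizerMod.2 fun s hs ↦ h s hs t ht
  have hStop : closure S ≤ centralizerMod N ((⊤ : Subgroup G) : Set G) :=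
    (closure_le _).2 (subset_centralizerMod_comm.1 (hS ▸ hSS))
  exact le_centralizerMod_iff.1 (hS ▸ hStop)

theorem isInvariantBlock_centralizerMod {P : Type*} [Group P] [MulDistribMulAction P G]
    {S : Set G} (hN : MulAction.IsInvariantBlock P (N : Set G))
    (hS : MulAction.IsInvariantBlock P S) :
    MulAction.IsInvariantBlock P (centralizerMod N S : Set G) := by
  rintro g _ ⟨x, hx, rfl⟩
  refine mem_centralizerMod.2 fun s hs ↦ ?_
  have hgs := hN g (Set.smul_mem_smul_set (mem_centralizerMod.1 hx _
    (hS g⁻¹ (Set.smul_mem_smul_set hs))))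
  simpa [commutatorElement_def, smul_mul'] using hgs

theorem commutator_commutator_le_of_rotate {H₁ H₂ H₃ : Subgroup G}
    (h₁ : ⁅⁅H₂, H₃⁆, H₁⁆ ≤ N) (h₂ : ⁅⁅H₃, H₁⁆, H₂⁆ ≤ N) : ⁅⁅H₁, H₂⁆, H₃⁆ ≤ N := by
  rw [← QuotientGroup.ker_mk' N, ← Subgroup.map_eq_bot_iff] at h₁ h₂ ⊢
  simp only [map_commutator] at h₁ h₂ ⊢
  exact commutator_commutator_eq_bot_of_rotate h₁ h₂

end CentralizerMod

section TwoStepCentralizer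

variable (G) in
/-- Blackburn's two-step centralizer: the elements of `G` acting trivially by conjugation on
`γ i ⧸ γ (i + 2)`. -/
def twoStepCentralizer (i : ℕ) : Subgroup G :=
  centralizerMod (γ (i + 2)) (γ i)

theorem lowerCentralSeries_le_centralizerMod (i : ℕ) (S : Set G) :
    γ i ≤ centralizerMod (γ (i + 1)) S := by
  refine fun x hx ↦ mem_centralizerMod.2 fun s _ ↦ ?_
  rw [← commutatorElement_inv]
  exact inv_mem (commutator_mem_commutator hx (mem_top s))

theorem commutator_le_twoStepCentralizer (i : ℕ) : commutator G ≤ twoStepCentralizer G i := by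
  rw [twoStepCentralizer, le_centralizerMod_iff, commutator_comm, commutator_def]
  refine commutator_commutator_le_of_rotate ?_ le_rfl
  rw [commutator_comm (⊤ : Subgroup G)]
  exact le_rfl

theorem twoStepCentralizer_ne_top {i : ℕ} (h : γ (i + 2) < γ (i + 1)) :
    twoStepCentralizer G i ≠ ⊤ :=
  fun htop ↦ h.not_ge (le_centralizerMod_iff.1 htop.ge)

theorem isInvariantBlock_twoStepCentralizer {P : Type*} [Group P] [MulDistribMulAction P G]
    (i : ℕ) : MulAction.IsInvariantBlock P (twoStepCentralizer G i : Set G) :=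
  isInvariantBlock_centralizerMod (isInvariantBlock_of_characteristic _)
    (isInvariantBlock_of_characteristic _)

theorem twoStepCentralizer_zero_le_one : twoStepCentralizer G 0 ≤ twoStepCentralizer G 1 := by
  have hT : ⁅⁅(⊤ : Subgroup G), twoStepCentralizer G 0⁆, ⊤⁆ ≤ γ 3 :=
    commutator_mono (le_centralizerMod_iff.1 le_rfl : _ ≤ γ 2) le_rfl
  refine le_centralizerMod_iff.2 (commutator_commutator_le_of_rotate (N := γ 3) hT ?_)
  rwa [commutator_comm (twoStepCentralizer G 0)]

theorem not_twoStepCentralizer_one_le_centralizerMod_singleton [Finite G]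
    (hindex : (twoStepCentralizer G 1).index ≤ 2) {t : G} (ht : t ∉ twoStepCentralizer G 1) :
    ¬ twoStepCentralizer G 1 ≤ centralizerMod (γ 2) {t} := by
  intro hle
  have htop : ⊤ ≤ centralizerMod (γ 2) {t} :=
    le_of_relIndex_le_two (by rwa [relIndex_top_right]) (mem_top t) ht hle
      (mem_centralizerMod_singleton_self t)
  exact ht (twoStepCentralizer_zero_le_one (subset_centralizerMod_comm.1 htop rfl))

theorem index_twoStepCentralizer_le [Finite G] {i : ℕ} (hlt : γ (i + 1) < γ i)
    (h : (γ (i + 1)).relIndex (γ i) ≤ 2) :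
    (twoStepCentralizer G i).index ≤ (γ (i + 2)).relIndex (γ (i + 1)) := by
  obtain ⟨c, hc, hc'⟩ := SetLike.exists_of_lt hlt
  have hcD : γ i ≤ centralizerMod (γ (i + 2)) (centralizerMod (γ (i + 2)) {c}) :=
    le_of_relIndex_le_two h hc hc' (lowerCentralSeries_le_centralizerMod (i + 1) _)
      (subset_centralizerMod_comm.1 subset_rfl rfl)
  have hle : centralizerMod (γ (i + 2)) {c} ≤ twoStepCentralizer G i :=
    subset_centralizerMod_comm.1 hcD
  exact (index_antitone hle).trans
    (index_centralizerMod_singleton_le fun x ↦ commutator_mem_commutator hc (mem_top x))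

end TwoStepCentralizer

section AbelianizationOfOrderFour

theorem commutator_le_of_forall_sq_mem {N : Subgroup G} [N.Normal] (h : ∀ x : G, x ^ 2 ∈ N) :
    commutator G ≤ N := by
  refine Normal.quotient_commutative_iff_commutator_le.1 ⟨⟨Commute.of_orderOf_dvd_two fun q ↦ ?_⟩⟩
  obtain ⟨x, rfl⟩ := QuotientGroup.mk_surjective q
  exact orderOf_dvd_of_pow_eq_one ((QuotientGroup.eq_one_iff _).2 (h x))

theorem relIndex_zpowers_dvd_two {N : Subgroup G} {c : G} (hc : c ^ 2 ∈ N) :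
    N.relIndex (zpowers c) ∣ 2 := by
  refine relIndex_dvd_two_iff.2 ⟨c, mem_zpowers c, ?_⟩
  rintro _ ⟨k, rfl⟩
  rcases k.even_or_odd' with ⟨m, rfl | rfl⟩
  · right
    simpa [zpow_mul] using N.zpow_mem hc m
  · left
    have h : c ^ (2 * m + 1) * c = (c ^ 2) ^ (m + 1) := by group
    exact h ▸ N.zpow_mem hc _

theorem relIndex_lowerCentralSeries_two_le_two {x y : G} (hxy : closure {x, y} = ⊤)
    (hx : x ^ 2 ∈ commutator G) : (γ 2).relIndex (γ 1) ≤ 2 := by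
  set c := ⁅x, y⁆
  have hc : c ∈ γ 1 := commutator_mem_commutator (mem_top x) (mem_top y)
  have hc_sq : c ^ 2 ∈ γ 2 := by
    have hx_sq : ⁅x ^ 2, y⁆ ∈ γ 2 := commutator_mem_commutator hx (mem_top y)
    have hxc : ⁅x, c⁆ ∈ γ 2 :=
      mem_centralizerMod_singleton.1 (lowerCentralSeries_le_centralizerMod 1 _ hc)
    have hmul : ⁅x ^ 2, y⁆ = ⁅x, c⁆ * c ^ 2 := by
      rw [pow_two, commutatorElement_mul_left_eq_conj_mul, commutatorElement_def x c]
      change x * c * x⁻¹ * c = _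
      group
    exact (mul_mem_cancel_left hxc).1 (hmul ▸ hx_sq)
  have hle : zpowers c ⊔ γ 2 ≤ γ 1 :=
    sup_le (zpowers_le.2 hc) (Subgroup.lowerCentralSeries_antitone ⊤ one_le_two)
  have hnormal : (zpowers c ⊔ γ 2).Normal :=
    commutator_top_right_le_iff.1 (le_sup_of_le_right (commutator_mono hle le_rfl))
  have hc_mem : c ∈ zpowers c ⊔ γ 2 := mem_sup_left (mem_zpowers c)
  have hge : γ 1 ≤ zpowers c ⊔ γ 2 := by
    refine commutator_le_of_closure_eq_top hxy ?_
    simp only [Set.mem_insert_iff, Set.mem_singleton_iff, forall_eq_or_imp, forall_eq,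
      commutatorElement_self, one_mem, true_and, and_true]
    exact ⟨hc_mem, commutatorElement_inv x y ▸ inv_mem hc_mem⟩
  calc (γ 2).relIndex (γ 1) = (γ 2).relIndex (zpowers c) := by
        rw [hge.antisymm hle, relIndex_sup_right]
    _ ≤ 2 := Nat.le_of_dvd two_pos (relIndex_zpowers_dvd_two hc_sq)

variable [Finite G] [Group.IsNilpotent G]

theorem closure_pair_eq_top_of_index_commutator_eq_four (h : (commutator G).index = 4) {x y : G}
    (hx : x ∉ commutator G) (hy : y ∉ commutator G) (hxy : x⁻¹ * y ∉ commutator G) :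
    closure {x, y} = ⊤ := by
  refine eq_top_of_sup_commutator_eq_top ?_
  set K := closure {x, y} ⊔ commutator G
  have hxK : x ∈ K := mem_sup_left (subset_closure (by simp))
  have hyK : y ∈ K := mem_sup_left (subset_closure (by simp))
  by_contra hK
  have hindex : (commutator G).relIndex K * K.index = 4 :=
    h ▸ relIndex_mul_index le_sup_right
  have hK_index : 1 < K.index := one_lt_index_of_ne_top hK
  exact hxy (inv_mul_mem_of_relIndex_le_two (by nlinarith) hxK hx hyK hy)

theorem sq_mem_commutator_of_index_commutator_eq_four (h : (commutator G).index = 4)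
    (hne : commutator G ≠ ⊥) (x : G) : x ^ 2 ∈ commutator G := by
  by_contra hx
  have hx' : x ∉ commutator G := fun h ↦ hx (pow_mem h 2)
  have htop : closure {x, x ^ 2} = ⊤ :=
    closure_pair_eq_top_of_index_commutator_eq_four h hx' hx (by simpa [pow_two] using hx')
  have hcomm : Commute x (x ^ 2) := Commute.self_pow x 2
  refine hne (le_bot_iff.1 (commutator_le_of_closure_eq_top htop ?_))
  simp [commutatorElement_eq_one_iff_mul_comm, hcomm.eq]

theorem exists_closure_pair_eq_top_of_index_commutator_eq_four (h : (commutator G).index = 4)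
    (hne : commutator G ≠ ⊥) : ∃ x y : G, closure {x, y} = ⊤ := by
  obtain ⟨a, b, hab⟩ : ∃ a b : G, ⁅a, b⁆ ∉ γ 2 := by
    by_contra! hall
    exact (lowerCentralSeries_succ_lt hne : γ 2 < γ 1).not_ge
      (commutator_le.2 fun a _ b _ ↦ hall a b)
  have ha : a ∉ commutator G := fun ha ↦ hab (commutator_mem_commutator ha (mem_top b))
  have hGD : commutator G ≤ centralizerMod (γ 2) {a} := lowerCentralSeries_le_centralizerMod 1 _
  have hbD : b ∉ centralizerMod (γ 2) {a} := mt mem_centralizerMod_singleton.1 hab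
  have haD : a ∈ centralizerMod (γ 2) {a} := mem_centralizerMod_singleton_self a
  exact ⟨a, b, closure_pair_eq_top_of_index_commutator_eq_four h ha (fun hb ↦ hbD (hGD hb))
    fun hab ↦ hbD ((mul_mem_cancel_left (inv_mem haD)).1 (hGD hab))⟩

theorem commutator_lt_twoStepCentralizer_one (h : (commutator G).index = 4) (hne : γ 2 ≠ ⊥) :
    commutator G < twoStepCentralizer G 1 := by
  have hne' : γ 1 ≠ ⊥ := lowerCentralSeries_ne_bot_of_le one_le_two hne
  have hsq := sq_mem_commutator_of_index_commutator_eq_four h hne'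
  obtain ⟨a, b, hab⟩ := exists_closure_pair_eq_top_of_index_commutator_eq_four h hne'
  have hrel : (γ 2).relIndex (γ 1) ≤ 2 := relIndex_lowerCentralSeries_two_le_two hab (hsq a)
  obtain ⟨x, hx⟩ : ∃ x : G, x ^ 2 ∉ γ 2 := by
    by_contra! hall
    exact (lowerCentralSeries_succ_lt hne').not_ge (commutator_le_of_forall_sq_mem hall)
  have hxG : x ∉ commutator G := fun hxG ↦ hx <| by
    have hx₁ : x ∉ γ 2 := fun hx₁ ↦ hx (pow_mem hx₁ 2)
    simpa [pow_two] using inv_mul_mem_of_relIndex_le_two hrel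
      (inv_mem hxG) (mt inv_mem_iff.1 hx₁) hxG hx₁
  have hxC : γ 1 ≤ centralizerMod (γ 3) {x} :=
    le_of_relIndex_le_two hrel (hsq x) hx (lowerCentralSeries_le_centralizerMod 2 _)
      (pow_mem (mem_centralizerMod_singleton_self x) 2)
  exact SetLike.lt_iff_le_and_exists.2
    ⟨commutator_le_twoStepCentralizer 1, x, subset_centralizerMod_comm.1 hxC rfl, hxG⟩

end AbelianizationOfOrderFour

section FixedPoints

open MulAction

theorem isPGroup_mulAut_of_fixedPoints_sup_commutator_eq_top [Finite G] [Group.IsNilpotent G]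
    {q : ℕ} (h : ∀ p : ℕ, p.Prime → p ≠ q → ∀ P : Subgroup (MulAut G), IsPGroup p P →
      FixedPoints.subgroup P G ⊔ commutator G = ⊤) : IsPGroup q (MulAut G) := by
  refine .of_card (Nat.eq_prime_pow_of_unique_prime_dvd Nat.card_pos.ne' fun {p} hp hdvd ↦ ?_)
  by_contra hpq
  have := Fact.mk hp
  obtain ⟨P⟩ : Nonempty (Sylow p (MulAut G)) := inferInstance
  have hfix : FixedPoints.subgroup P G = ⊤ :=
    eq_top_of_sup_commutator_eq_top (h p hp hpq P P.isPGroup')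
  refine P.ne_bot_of_dvd_card hdvd ((eq_bot_iff_forall _).2 fun α hα ↦ MulEquiv.ext fun x ↦ ?_)
  exact (hfix ▸ mem_top x : x ∈ FixedPoints.subgroup P G) ⟨α, hα⟩

variable [Finite G] {P : Type*} [Group P] [MulDistribMulAction P G] {p : ℕ} [Fact p.Prime]

theorem fixedPoints_sup_eq_top_of_index_le_two (hP : IsPGroup p P) (hpG : ¬ p ∣ Nat.card G)
    {H : Subgroup G} (hH : IsInvariantBlock P (H : Set G)) (hindex : H.index ≤ 2) :
    FixedPoints.subgroup P G ⊔ H = ⊤ :=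
  fixedPoints_sup_eq_top_of_relIndex_le_two hP hpG hH (isInvariantBlock_of_characteristic ⊤)
    (by rwa [relIndex_top_right]) (sup_top_eq _)

theorem fixedPoints_sup_commutator_eq_top_of_index_eq_four [Group.IsNilpotent G]
    (hP : IsPGroup p P) (hpG : ¬ p ∣ Nat.card G) (hne : γ 2 ≠ ⊥)
    (hindex : (commutator G).index = 4) :
    FixedPoints.subgroup P G ⊔ commutator G = ⊤ := by
  set C := twoStepCentralizer G 1
  have hGC : commutator G < C := commutator_lt_twoStepCentralizer_one hindex hne
  have hC : C ≠ ⊤ := twoStepCentralizer_ne_top (lowerCentralSeries_succ_lt hne)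
  have hmul : (commutator G).relIndex C * C.index = 4 := hindex ▸ relIndex_mul_index hGC.le
  have hrel : 2 ≤ (commutator G).relIndex C := two_le_relIndex hGC.not_ge
  have hC_index : 1 < C.index := one_lt_index_of_ne_top hC
  have hC_inv : IsInvariantBlock P (C : Set G) := isInvariantBlock_twoStepCentralizer 1
  exact fixedPoints_sup_eq_top_of_relIndex_le_two hP hpG (isInvariantBlock_of_characteristic _)
    hC_inv (by nlinarith) (fixedPoints_sup_eq_top_of_index_le_two hP hpG hC_inv (by nlinarith))

theorem fixedPoints_sup_commutator_eq_top_of_index_le_eight [Group.IsNilpotent G]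
    (hP : IsPGroup p P) (hpG : ¬ p ∣ Nat.card G) (hne : γ 2 ≠ ⊥)
    (hindex : (commutator G).index ≤ 8) (h₁ : (γ 2).relIndex (γ 1) ≤ 2)
    (h₂ : (γ 3).relIndex (γ 2) ≤ 2) :
    FixedPoints.subgroup P G ⊔ commutator G = ⊤ := by
  have hlt : γ 2 < γ 1 :=
    lowerCentralSeries_succ_lt (lowerCentralSeries_ne_bot_of_le one_le_two hne)
  set C := twoStepCentralizer G 1
  have hC_inv : IsInvariantBlock P (C : Set G) := isInvariantBlock_twoStepCentralizer 1
  have hC_top : C ≠ ⊤ := twoStepCentralizer_ne_top (lowerCentralSeries_succ_lt hne)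
  have hC : C.index = 2 := ((index_twoStepCentralizer_le hlt h₁).trans h₂).antisymm
    (one_lt_index_of_ne_top hC_top)
  have hFC : FixedPoints.subgroup P G ⊔ C = ⊤ :=
    fixedPoints_sup_eq_top_of_index_le_two hP hpG hC_inv hC.le
  obtain ⟨t, ht, htC⟩ : ∃ t ∈ FixedPoints.subgroup P G, t ∉ C :=
    SetLike.not_le_iff_exists.1 fun hle ↦ hC_top (sup_eq_right.2 hle ▸ hFC)
  set D := centralizerMod (γ 2) {t}
  have hD : D.index ≤ 2 := (index_centralizerMod_singleton_le fun x ↦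
    commutator_mem_commutator (mem_top t) (mem_top x)).trans h₁
  have hD_inv : IsInvariantBlock P (D : Set G) :=
    isInvariantBlock_centralizerMod (isInvariantBlock_of_characteristic _) fun g ↦ by
      rw [Set.smul_set_singleton, ht g]
  have hCD_inv := isInvariantBlock_inf hC_inv hD_inv
  have hCD : (C ⊓ D).relIndex C = 2 := by
    rw [inf_relIndex_left]
    exact ((relIndex_le_index D C).trans hD).antisymm
      (two_le_relIndex (not_twoStepCentralizer_one_le_centralizerMod_singleton hC.le htC))
  have hmul : (commutator G).relIndex (C ⊓ D) * (2 * 2) = (commutator G).index := by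
    have hle : commutator G ≤ C ⊓ D :=
      le_inf (commutator_le_twoStepCentralizer 1) (lowerCentralSeries_le_centralizerMod 1 _)
    rw [← relIndex_mul_index hle, ← relIndex_mul_index (inf_le_left : C ⊓ D ≤ C), hCD, hC]
  exact fixedPoints_sup_eq_top_of_relIndex_le_two hP hpG (isInvariantBlock_of_characteristic _)
    hCD_inv (by omega)
    (fixedPoints_sup_eq_top_of_relIndex_le_two hP hpG hCD_inv hC_inv hCD.le hFC)

theorem fixedPoints_sup_commutator_eq_top (hG : IsPGroup 2 G) (hP : IsPGroup p P)
    (hpG : ¬ p ∣ Nat.card G) (hne : γ 2 ≠ ⊥) (hindex : (γ 3).index ≤ 32) :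
    FixedPoints.subgroup P G ⊔ commutator G = ⊤ := by
  have : Fact (Nat.Prime 2) := ⟨Nat.prime_two⟩
  have : Group.IsNilpotent G := hG.isNilpotent
  have hlt₁ : γ 2 < γ 1 :=
    lowerCentralSeries_succ_lt (lowerCentralSeries_ne_bot_of_le one_le_two hne)
  have hlt₂ : γ 3 < γ 2 := lowerCentralSeries_succ_lt hne
  have hrel₁ : 2 ≤ (γ 2).relIndex (γ 1) := two_le_relIndex hlt₁.not_ge
  have hrel₂ : 2 ≤ (γ 3).relIndex (γ 2) := two_le_relIndex hlt₂.not_ge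
  have hmul : (γ 3).relIndex (γ 2) * ((γ 2).relIndex (γ 1) * (commutator G).index) ≤ 32 := by
    rwa [← top_lowerCentralSeries_one, relIndex_mul_index hlt₁.le, relIndex_mul_index hlt₂.le]
  obtain ⟨k, hk⟩ : ∃ k, (commutator G).index = 2 ^ k := hG.index _
  obtain hk₁ | rfl | hk₃ : k ≤ 1 ∨ k = 2 ∨ 3 ≤ k := by omega
  · exact fixedPoints_sup_eq_top_of_index_le_two hP hpG (isInvariantBlock_of_characteristic _)
      (hk ▸ Nat.pow_le_pow_right two_pos hk₁)
  · exact fixedPoints_sup_commutator_eq_top_of_index_eq_four hP hpG hne hk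
  · have hidx : 8 ≤ (commutator G).index := hk ▸ Nat.pow_le_pow_right two_pos hk₃
    have hle := (Nat.mul_le_mul hrel₂ (Nat.mul_le_mul_right _ hrel₁)).trans hmul
    have hle₁ := (Nat.mul_le_mul hrel₂ (Nat.mul_le_mul_left _ hidx)).trans hmul
    have hle₂ := (Nat.mul_le_mul_left _ (Nat.mul_le_mul hrel₁ hidx)).trans hmul
    exact fixedPoints_sup_commutator_eq_top_of_index_le_eight hP hpG hne (by omega) (by omega)
      (by omega)

end FixedPoints

theorem aut_isPGroup_of_coclass_two_of_card_ge_general [Finite G] (hG : IsPGroup 2 G)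
    (hne : γ 2 ≠ ⊥) (hindex : (γ 3).index ≤ 32) : IsPGroup 2 (MulAut G) := by
  have : Fact (Nat.Prime 2) := ⟨Nat.prime_two⟩
  have : Group.IsNilpotent G := hG.isNilpotent
  refine isPGroup_mulAut_of_fixedPoints_sup_commutator_eq_top fun p hp hp₂ P hP ↦ ?_
  have := Fact.mk hp
  obtain ⟨m, hm⟩ := IsPGroup.iff_card.1 hG
  have hpG : ¬ p ∣ Nat.card G := fun hdvd ↦
    hp₂ (Nat.prime_eq_prime_of_dvd_pow hp Nat.prime_two (hm ▸ hdvd))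
  exact fixedPoints_sup_commutator_eq_top hG hP hpG hne hindex

end LowerCentralSeries

/-- The automorphism group of any finite `2`-group of order `2 ^ n` with `n ≥ 5` and
coclass `2` (nilpotency class `n - 2`) is a `2`-group. -/
theorem aut_isPGroup_of_coclass_two_of_card_ge
    {G : Type*} [Group G] [Finite G] [Group.IsNilpotent G] {n : ℕ} (hn : 5 ≤ n)
    (hcard : Nat.card G = 2 ^ n) (hclass : Group.nilpotencyClass G = n - 2) :
    IsPGroup 2 (MulAut G) := by
  refine aut_isPGroup_of_coclass_two_of_card_ge_general (.of_card hcard)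
    (mt Subgroup.lowerCentralSeries_eq_bot_iff_nilpotencyClass_le.1 (by omega)) ?_
  refine index_lowerCentralSeries_le (d := 2) ?_ 3
  rw [hcard, hclass, Nat.sub_add_cancel (by omega)]
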